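/- Let X be an implicative-orthomodular algebra. Every deductive system of X is a filter of X. -/

import Mathlib

/-! A deductive system is closed under every implication whose value is `1`. Contraposition and
exchange give `x → (y → x ⊙ y) = 1`, so two applications of modus ponens yield closure under `⊙`;
and `x = x ⊓ y` implies `x → y = 1`, so one application yields upward closure for `≤_Q`. -/

/-- An involutive BE algebra `(X, →, 0, 1)`. -/
structure InvBE (X : Type*) where
  imp : X → X → X
  one : X
  zero : X
  imp_self : ∀ x, imp x x = one
  imp_one : ∀ x, imp x one = one
  one_imp : ∀ x, imp one x = x
  exchange : ∀ x y z, imp x (imp y z) = imp y (imp x z)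
  zero_imp : ∀ x, imp zero x = one
  imp_involutive : ∀ x, imp (imp x zero) zero = x

namespace InvBE

variable {X : Type*} (A : InvBE X)

/-- `x* := x → 0`. -/
def neg (x : X) : X := A.imp x A.zero

/-- `x ⊓ y := ((x* → y*) → y*)*`. -/
def inf (x y : X) : X := A.neg (A.imp (A.imp (A.neg x) (A.neg y)) (A.neg y))

/-- `x ∪ y := (x → y) → y`. -/
def sup (x y : X) : X := A.imp (A.imp x y) y

/-- `x ⊙ y := (x → y*)*`. -/
def odot (x y : X) : X := A.neg (A.imp x (A.neg y))

/-- `x ⊕ y := (x* ⊙ y*)*`. -/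
def oplus (x y : X) : X := A.neg (A.odot (A.neg x) (A.neg y))

/-- `x ≤_Q y` iff `x = x ⊓ y`. -/
def leQ (x y : X) : Prop := x = A.inf x y

/-- `x ≤ y` iff `x → y = 1`. -/
def le (x y : X) : Prop := A.imp x y = A.one

/-- (IOM): `x ⊓ (y → x) = x` for all `x, y`. -/
def IOM : Prop := ∀ x y, A.inf x (A.imp y x) = x

/-- (QW): `x → ((x ⊓ y) ⊓ (z ⊓ x)) = (x → y) ⊓ (x → z)` for all `x, y, z`. -/
def QW : Prop :=
  ∀ x y z, A.imp x (A.inf (A.inf x y) (A.inf z x)) = A.inf (A.imp x y) (A.imp x z)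

/-- A filter: nonempty, closed under `⊙`, upward closed for `≤_Q`. -/
def IsFilter (F : Set X) : Prop :=
  F.Nonempty ∧ (∀ x ∈ F, ∀ y ∈ F, A.odot x y ∈ F) ∧
    (∀ x ∈ F, ∀ y : X, A.leQ x y → y ∈ F)

/-- A deductive system: contains `1` and is closed under modus ponens. -/
def IsDS (F : Set X) : Prop :=
  A.one ∈ F ∧ ∀ x y : X, x ∈ F → A.imp x y ∈ F → y ∈ F

/-- `pow x n` is the `⊙`-product of `n + 1` copies of `x`, i.e. `x^(n+1)`. -/
def pow (x : X) : ℕ → X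
  | 0 => x
  | n + 1 => A.odot x (pow x n)

/-- A maximal filter: proper and not contained in any other proper filter. -/
def IsMaximalFilter (F : Set X) : Prop :=
  A.IsFilter F ∧ F ≠ Set.univ ∧
    ∀ G : Set X, A.IsFilter G → F ⊆ G → G ≠ Set.univ → G = F

/-- A strongly maximal filter: for every `x ∉ F` there is `n ≥ 1` with `(xⁿ)* ∈ F`. -/
def IsStronglyMaximalFilter (F : Set X) : Prop :=
  A.IsFilter F ∧ ∀ x : X, x ∉ F → ∃ n : ℕ, A.neg (A.pow x n) ∈ F

/-- `x ≡_F y` iff there is `f` with `x, y ≤_Q f` and `f → x, f → y ∈ F`. -/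
def cong (F : Set X) (x y : X) : Prop :=
  ∃ f : X, A.leQ x f ∧ A.leQ y f ∧ A.imp f x ∈ F ∧ A.imp f y ∈ F

end InvBE

namespace InvBE

theorem imp_neg_comm {X : Type*} (A : InvBE X) (x y : X) :
    A.imp x (A.neg y) = A.imp y (A.neg x) :=
  A.exchange x y A.zero

theorem neg_neg {X : Type*} (A : InvBE X) (x : X) : A.neg (A.neg x) = x :=
  A.imp_involutive x

theorem imp_imp_odot {X : Type*} (A : InvBE X) (x y : X) :
    A.imp x (A.imp y (A.odot x y)) = A.one := by
  unfold odot
  rw [imp_neg_comm A y, A.exchange, A.imp_self]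

theorem imp_eq_one_of_leQ {X : Type*} (A : InvBE X) {x y : X} (h : A.leQ x y) :
    A.imp x y = A.one := by
  have hx : A.neg x = A.imp (A.imp (A.neg x) (A.neg y)) (A.neg y) := by
    conv_lhs => rw [h]
    exact A.neg_neg _
  calc A.imp x y = A.imp x (A.neg (A.neg y)) := by rw [A.neg_neg]
    _ = A.imp (A.neg y) (A.neg x) := A.imp_neg_comm _ _
    _ = A.imp (A.neg y) (A.imp (A.imp (A.neg x) (A.neg y)) (A.neg y)) := congrArg _ hx
    _ = A.one := by rw [A.exchange, A.imp_self, A.imp_one]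

end InvBE

/-- In an IOM algebra, every deductive system is a filter. -/
theorem stmt_15 {X : Type*} (A : InvBE X) (hA : A.IOM) :
    ∀ F : Set X, A.IsDS F → A.IsFilter F := by
  rintro F ⟨h1, mp⟩
  refine ⟨⟨A.one, h1⟩, fun x hx y hy => ?_, fun x hx y hxy => ?_⟩
  · exact mp y _ hy (mp x _ hx (by rw [A.imp_imp_odot]; exact h1))
  · exact mp x y hx (by rw [A.imp_eq_one_of_leQ hxy]; exact h1)
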